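/- Let h, k, j, l, m be integers with k, j, l, m ≥ 2 and h ≥ k + 1. Then there are no integers a, b, c, d, e with a ≥ 1, h·a² = k·b² + j·c² + l·d² + m·e² − 1, and h·a ≤ k·b. Equivalently, every vector F ∈ Γ with F² = −2 and ⟨F, D⟩ > 0 satisfies ⟨F, D+L⟩ > 0. -/

import Mathlib

/-- Let h, k, j, l, m be integers with k, j, l, m ≥ 2 and h ≥ k + 1.
Then there are no integers a, b, c, d, e with a ≥ 1,
h·a² = k·b² + j·c² + l·d² + m·e² − 1, and h·a ≤ k·b.
(Equivalently: every F ∈ Γ with F² = −2 and ⟨F, D⟩ > 0 satisfies ⟨F, D+L⟩ > 0.) -/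
theorem stmt_2 (h k j l m : ℤ) (hk : k ≥ 2) (hj : j ≥ 2) (hl : l ≥ 2)
    (hm : m ≥ 2) (hh : h ≥ k + 1) :
    ¬ ∃ a b c d e : ℤ, a ≥ 1 ∧
      h * a ^ 2 = k * b ^ 2 + j * c ^ 2 + l * d ^ 2 + m * e ^ 2 - 1 ∧
      h * a ≤ k * b := by
  rintro ⟨a, b, c, d, e, ha, heq, hle⟩
  -- `k * b ≥ h * a ≥ (k + 1) * a > k * a` forces `b > a`.
  have hab : a < b := by
    by_contra! hba
    nlinarith [mul_le_mul_of_nonneg_left hba (by linarith : (0 : ℤ) ≤ k),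
      mul_le_mul_of_nonneg_right hh (by linarith : (0 : ℤ) ≤ a)]
  have hc : 0 ≤ j * c ^ 2 := by positivity
  have hd : 0 ≤ l * d ^ 2 := by positivity
  have he : 0 ≤ m * e ^ 2 := by positivity
  -- Multiplying `h * a ≤ k * b` by `a` gives `k * b ^ 2 - 1 ≤ h * a ^ 2 ≤ k * b * a`,
  -- so `k * b * (b - a) ≤ 1`, although `k ≥ 2` and `b, b - a ≥ 1`.
  have h1 : h * a * a ≤ k * b * a := mul_le_mul_of_nonneg_right hle (by linarith)
  have h2 : 2 ≤ k * b := by nlinarith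
  have h3 : k * b * 1 ≤ k * b * (b - a) :=
    mul_le_mul_of_nonneg_left (by linarith) (by linarith)
  nlinarith
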